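/- Let B → A be a ring homomorphism such that A is a finitely generated projective left B-module and a faithfully flat right B-module (via this homomorphism). If fin.dim B < ∞, then fin.dim B ≤ fin.dim A. -/

import Mathlib

open CategoryTheory Limits

universe u

/-- The projective dimension of an object `M` of an abelian category, as an element of
`ℕ∞ = ℕ ∪ {∞}`: the least `n` such that `M` admits a projective resolution vanishing in
degrees `> n` (and `⊤` if there is no such finite resolution). -/
noncomputable def projDim {C : Type*} [Category C] [Abelian C] (M : C) : ℕ∞ :=
  sInf {n : ℕ∞ | ∃ P : CategoryTheory.ProjectiveResolution M,
    ∀ i : ℕ, n < (i : ℕ∞) → Limits.IsZero (P.complex.X i)}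

/-- The finitistic dimension of a ring `R`:
`fin.dim R = sup { pd_R M : M a finitely generated left R-module with pd_R M < ∞ } ∈ ℕ ∪ {∞}`. -/
noncomputable def finDim (R : Type u) [Ring R] : ℕ∞ :=
  sSup {d : ℕ∞ | ∃ M : ModuleCat.{u} R, Module.Finite R M ∧ projDim M ≠ ⊤ ∧ projDim M = d}

/-!
Write `R` for restriction of scalars.  Flatness makes `E = A ⊗_B -` exact and projectivity of `A`
over `B` makes `R` preserve projectives, so neither functor raises projective dimension.  By
faithfulness the unit `M ⟶ R (E M)` is a monomorphism.  If `M` is finitely generated and realizes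
the finite number `fin.dim B`, then the cokernel of the unit, which is finitely generated of finite
projective dimension, satisfies `pd (coker) ≤ fin.dim B = pd M`.  The long exact sequence of `Ext`
then forces `pd M ≤ pd (R (E M)) ≤ pd (E M) ≤ fin.dim A`.
-/

section Resolutions

variable {C : Type*} [Category C] [Abelian C]

lemma exact_comp_mono {S : ShortComplex C} (hS : S.Exact) {Y : C} (i : S.X₃ ⟶ Y) [Mono i] :
    (ShortComplex.mk S.f (S.g ≫ i) (by simp)).Exact := by
  let φ : S ⟶ ShortComplex.mk S.f (S.g ≫ i) (by simp) := { τ₁ := 𝟙 _, τ₂ := 𝟙 _, τ₃ := i }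
  have : Epi φ.τ₁ := inferInstanceAs (Epi (𝟙 _))
  have : IsIso φ.τ₂ := inferInstanceAs (IsIso (𝟙 _))
  have : Mono φ.τ₃ := ‹Mono i›
  exact (ShortComplex.exact_iff_of_epi_of_isIso_of_mono φ).1 hS

lemma exact_epi_comp {S : ShortComplex C} (hS : S.Exact) {Y : C} (p : Y ⟶ S.X₁) [Epi p] :
    (ShortComplex.mk (p ≫ S.f) S.g (by simp)).Exact := by
  let φ : ShortComplex.mk (p ≫ S.f) S.g (by simp) ⟶ S := { τ₁ := p, τ₂ := 𝟙 _, τ₃ := 𝟙 _ }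
  have : Epi φ.τ₁ := ‹Epi p›
  have : IsIso φ.τ₂ := inferInstanceAs (IsIso (𝟙 _))
  have : Mono φ.τ₃ := inferInstanceAs (Mono (𝟙 _))
  exact (ShortComplex.exact_iff_of_epi_of_isIso_of_mono φ).2 hS

/-- The projective resolution of `Z` given by an exact sequence `⋯ ⟶ K₁ ⟶ K₀ ⟶ Z ⟶ 0` with
projective terms `Kᵢ`, where exactness is expressed degreewise rather than as a
quasi-isomorphism. -/
noncomputable def projectiveResolutionOfExact {Z : C} (K : ChainComplex C ℕ)
    (hK : ∀ n, Projective (K.X n)) (ε : K.X 0 ⟶ Z) (hε : Epi ε) (w : K.d 1 0 ≫ ε = 0)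
    (h₀ : (ShortComplex.mk _ _ w).Exact) (h : ∀ n, K.ExactAt (n + 1)) :
    ProjectiveResolution Z where
  complex := K
  projective := hK
  π := (ChainComplex.toSingle₀Equiv K Z).symm ⟨ε, w⟩
  quasiIso := ⟨by
    rintro (_ | n)
    · rw [ChainComplex.quasiIsoAt₀_iff, ShortComplex.quasiIso_iff_of_zeros' _
        (K.shape _ _ (by simp)) rfl rfl]
      refine (ShortComplex.exact_and_epi_g_iff_of_iso ?_).2 ⟨h₀, hε⟩
      exact ShortComplex.isoMk (Iso.refl _) (Iso.refl _) (Iso.refl _)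
        ((Category.id_comp _).trans (Category.comp_id _).symm)
        ((Category.id_comp _).trans
          ((ChainComplex.toSingle₀Equiv_symm_apply_f_zero ε w).symm.trans
            (Category.comp_id _).symm))
    · rw [quasiIsoAt_iff_exactAt' _ _ (ChainComplex.exactAt_succ_single_obj _ _)]
      exact h n⟩

/-- The augmentation `P₀ ⟶ Z` of a projective resolution.  This is the component `P.π.f 0`, whose
codomain is only definitionally equal to `Z`. -/
def augmentation {Z : C} (P : ProjectiveResolution Z) : P.complex.X 0 ⟶ Z :=
  P.π.f 0

instance epi_augmentation {Z : C} (P : ProjectiveResolution Z) : Epi (augmentation P) :=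
  inferInstanceAs (Epi (P.π.f 0))

lemma d_comp_augmentation {Z : C} (P : ProjectiveResolution Z) :
    P.complex.d 1 0 ≫ augmentation P = 0 :=
  P.complex_d_comp_π_f_zero

lemma exact_augmentation {Z : C} (P : ProjectiveResolution Z) :
    (ShortComplex.mk _ _ (d_comp_augmentation P)).Exact :=
  P.exact₀

/-- Given a short exact sequence `0 ⟶ X₁ ⟶ X₂ ⟶ X₃ ⟶ 0` with `X₂` projective, a projective
resolution of the syzygy `X₁`, shifted by one degree and followed by `X₂`, resolves `X₃`. -/
noncomputable def spliceProjectiveResolution {S : ShortComplex C} (hS : S.ShortExact)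
    (hproj : Projective S.X₂) (Q : ProjectiveResolution S.X₁) : ProjectiveResolution S.X₃ :=
  have : Mono S.f := hS.mono_f
  projectiveResolutionOfExact
    (ChainComplex.augment Q.complex (augmentation Q ≫ S.f)
      (by rw [← Category.assoc, d_comp_augmentation, zero_comp]))
    (Nat.rec hproj fun n _ => Q.projective n) S.g hS.epi_g
    (show (augmentation Q ≫ S.f) ≫ S.g = 0 by simp) (exact_epi_comp hS.exact (augmentation Q))
    (by
      intro n
      rw [HomologicalComplex.exactAt_iff' _ (n + 2) (n + 1) n (by simp) (by simp)]
      rcases n with _ | n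
      · exact exact_comp_mono (exact_augmentation Q) S.f
      · exact Q.exact_succ n)

end Resolutions

section ProjDim

variable {C : Type*} [Category C] [Abelian C]

lemma hasProjectiveDimensionLT_of_projectiveResolution {M : C} (P : ProjectiveResolution M) (n : ℕ)
    (hP : ∀ i, n ≤ i → IsZero (P.complex.X i)) : HasProjectiveDimensionLT M n := by
  let := HasExt.standard C
  rw [hasProjectiveDimensionLT_iff]
  intro i hi Y e
  obtain ⟨g, -, rfl⟩ := P.extMk_surjective e (i + 1) rfl
  obtain rfl : g = 0 := (hP i hi).eq_of_src _ _
  exact P.extMk_zero (i + 1) rfl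

lemma exists_projectiveResolution_isZero_of_hasProjectiveDimensionLE [EnoughProjectives C] (n : ℕ)
    (M : C) [HasProjectiveDimensionLE M n] :
    ∃ P : ProjectiveResolution M, ∀ i, n < i → IsZero (P.complex.X i) := by
  induction n generalizing M with
  | zero =>
    have : Projective M := (projective_iff_hasProjectiveDimensionLE_zero M).2 ‹_›
    exact ⟨ProjectiveResolution.self M, fun i hi =>
      HomologicalComplex.isZero_single_obj_X _ _ _ _ hi.ne'⟩
  | succ n ih =>
    have hS : (ShortComplex.mk (kernel.ι (Projective.π M)) (Projective.π M) (by simp)).ShortExact :=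
      { exact := ShortComplex.exact_kernel _ }
    have hproj : Projective (Projective.over M) := inferInstance
    have : HasProjectiveDimensionLE (kernel (Projective.π M)) n :=
      (hS.hasProjectiveDimensionLT_X₃_iff n hproj).1 ‹_›
    obtain ⟨Q, hQ⟩ := ih (kernel (Projective.π M))
    refine ⟨spliceProjectiveResolution hS hproj Q, ?_⟩
    rintro (_ | i) hi
    · omega
    · exact hQ i (by omega)

lemma projDim_le_iff [EnoughProjectives C] (M : C) (n : ℕ) :
    projDim M ≤ n ↔ HasProjectiveDimensionLE M n := by
  constructor
  · intro h
    have hlt : projDim M < (n + 1 : ℕ) := h.trans_lt (by exact_mod_cast n.lt_succ_self)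
    obtain ⟨m, ⟨P, hP⟩, hm⟩ := sInf_lt_iff.1 hlt
    exact hasProjectiveDimensionLT_of_projectiveResolution P (n + 1) fun i hi =>
      hP i (hm.trans_le (Nat.cast_le.2 hi))
  · intro h
    obtain ⟨P, hP⟩ := exists_projectiveResolution_isZero_of_hasProjectiveDimensionLE n M
    exact sInf_le ⟨P, fun i hi => hP i (by exact_mod_cast hi)⟩

lemma projDim_map_le {D : Type*} [Category D] [Abelian D] (F : C ⥤ D) [F.Additive]
    [F.PreservesProjectiveObjects] [F.PreservesHomology] (M : C) :
    projDim (F.obj M) ≤ projDim M :=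
  sInf_le_sInf fun _ ⟨P, hP⟩ => ⟨F.mapProjectiveResolution P, fun i hi => F.map_isZero (hP i hi)⟩

lemma projDim_X₃_le [EnoughProjectives C] {S : ShortComplex C} (hS : S.ShortExact) :
    projDim S.X₃ ≤ max (projDim S.X₁ + 1) (projDim S.X₂) := by
  cases h : max (projDim S.X₁ + 1) (projDim S.X₂) with
  | top => exact le_top
  | coe n =>
    obtain ⟨h₁, h₂⟩ := max_le_iff.1 h.le
    rcases n with _ | k
    · simp at h₁
    · have h₁ : projDim S.X₁ ≤ k := by simpa using h₁
      rw [projDim_le_iff] at h₁ h₂ ⊢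
      exact hS.hasProjectiveDimensionLT_X₃ (k + 1) h₁ h₂

lemma projDim_X₃_ne_top [EnoughProjectives C] {S : ShortComplex C} (hS : S.ShortExact)
    (h₁ : projDim S.X₁ ≠ ⊤) (h₂ : projDim S.X₂ ≠ ⊤) : projDim S.X₃ ≠ ⊤ :=
  ne_top_of_le_ne_top (max_lt (WithTop.add_lt_top.2 ⟨h₁.lt_top, ENat.one_lt_top⟩) h₂.lt_top).ne
    (projDim_X₃_le hS)

lemma projDim_X₁_le_projDim_X₂ [EnoughProjectives C] {S : ShortComplex C} (hS : S.ShortExact)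
    (h₁ : projDim S.X₁ ≠ ⊤) (h₃ : projDim S.X₃ ≤ projDim S.X₁) :
    projDim S.X₁ ≤ projDim S.X₂ := by
  obtain ⟨_ | k, hk⟩ := ENat.ne_top_iff_exists.1 h₁
  · exact hk ▸ zero_le
  by_contra! hlt
  have h₂ : projDim S.X₂ ≤ k := Order.le_of_lt_add_one (by simpa [← hk] using hlt)
  rw [← hk, projDim_le_iff] at h₃
  rw [projDim_le_iff] at h₂
  have hle : projDim S.X₁ ≤ k :=
    (projDim_le_iff _ k).2 (hS.hasProjectiveDimensionLT_X₁ (k + 1) h₂ h₃)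
  rw [← hk] at hle
  exact absurd (Nat.cast_le.1 hle) k.not_succ_le_self

end ProjDim

section Adjunction

lemma preservesHomology_of_adjunction_of_preservesMonomorphisms {C D : Type*} [Category C]
    [Abelian C] [Category D] [Abelian D] {L : C ⥤ D} {R : D ⥤ C} (adj : L ⊣ R)
    [L.PreservesZeroMorphisms] [L.PreservesMonomorphisms] : L.PreservesHomology := by
  have : PreservesColimitsOfSize.{0, 0} L := adj.leftAdjoint_preservesColimits
  exact L.preservesHomology_of_preservesMonos_and_cokernels

/-- The triangle identity makes `L.map (adj.unit.app M)` split mono, so `L` kills the kernel of the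
unit. -/
lemma mono_unit_app_of_reflects_isZero {C D : Type*} [Category C] [Preadditive C] [HasKernels C]
    [Category D] [HasZeroMorphisms D] {L : C ⥤ D} {R : D ⥤ C} (adj : L ⊣ R)
    [L.PreservesZeroMorphisms] [L.PreservesMonomorphisms]
    (hL : ∀ X, IsZero (L.obj X) → IsZero X) (M : C) : Mono (adj.unit.app M) := by
  have : Mono (L.map (adj.unit.app M)) :=
    (SplitMono.mk _ (adj.left_triangle_components M)).mono
  refine Preadditive.mono_of_isZero_kernel _ (hL _ ?_)
  have hzero : L.map (kernel.ι (adj.unit.app M)) = 0 :=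
    zero_of_comp_mono (L.map (adj.unit.app M)) (by
      rw [← L.map_comp, kernel.condition, L.map_zero])
  exact IsZero.of_mono_eq_zero _ hzero

end Adjunction

section ChangeOfRings

universe v w u₁ u₂

lemma coextendScalars_preservesEpimorphisms {B : Type u₁} {A : Type u₂} [Ring B] [Ring A]
    (f : B →+* A)
    [Module.Projective B ((ModuleCat.restrictScalars f).obj (ModuleCat.of A A))] :
    (ModuleCat.coextendScalars.{u₁, u₂, max u₂ w} f).PreservesEpimorphisms where
  preserves g hg := by
    rw [ModuleCat.epi_iff_surjective] at hg ⊢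
    intro y
    obtain ⟨x, hx⟩ := Module.projective_lifting_property g.hom
      (ModuleCat.CoextendScalars.equiv f _ y) hg
    exact ⟨(ModuleCat.CoextendScalars.equiv f _).symm x, ModuleCat.CoextendScalars.ext hx⟩

lemma restrictScalars_preservesProjectiveObjects {B : Type u₁} {A : Type u₂} [Ring B] [Ring A]
    (f : B →+* A)
    [Module.Projective B ((ModuleCat.restrictScalars f).obj (ModuleCat.of A A))] :
    (ModuleCat.restrictScalars.{max u₂ w} f).PreservesProjectiveObjects :=
  have := coextendScalars_preservesEpimorphisms.{w} f
  Functor.preservesProjectiveObjects_of_adjunction_of_preservesEpimorphisms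
    (ModuleCat.restrictCoextendScalarsAdj.{w} f)

lemma restrictScalars_preservesHomology {B : Type u₁} {A : Type u₂} [Ring B] [Ring A]
    (f : B →+* A) : (ModuleCat.restrictScalars.{v} f).PreservesHomology :=
  Functor.preservesHomology_of_map_exact _ fun S hS => by
    rw [ShortComplex.moduleCat_exact_iff] at hS ⊢
    exact hS

lemma finite_restrictScalars_obj {B : Type u₁} {A : Type u₂} [Ring B] [Ring A] (f : B →+* A)
    [hA : Module.Finite B ((ModuleCat.restrictScalars f).obj (ModuleCat.of A A))]
    (N : ModuleCat.{v} A) [Module.Finite A N] :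
    Module.Finite B ((ModuleCat.restrictScalars f).obj N) := by
  let _ : Module B A := Module.compHom A f
  let _ : Module B N := Module.compHom N f
  have : Module.Finite B A := hA
  have : IsScalarTower B A N := ⟨fun b a x => mul_smul (f b) a x⟩
  exact Module.Finite.trans (R := B) A N

variable {B : Type u₁} {A : Type u₂} [Ring B] [Ring A] {f : B →+* A}
  {E : ModuleCat.{v} B ⥤ ModuleCat.{v} A}

lemma span_unit_image_eq_top (adj : E ⊣ ModuleCat.restrictScalars f) {M : ModuleCat.{v} B}
    {s : Set M} (hs : Submodule.span B s = ⊤) :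
    Submodule.span A (Set.image (β := E.obj M) (adj.unit.app M) s) = ⊤ := by
  set N : Submodule A (E.obj M) := Submodule.span A (Set.image (β := E.obj M) (adj.unit.app M) s)
  have hmkQ : ModuleCat.ofHom N.mkQ = 0 := by
    refine (adj.homEquiv M (ModuleCat.of A (E.obj M ⧸ N))).injective ?_
    rw [Adjunction.homEquiv_unit, Adjunction.homEquiv_unit, Functor.map_zero, comp_zero]
    refine ModuleCat.hom_ext (LinearMap.ext_on hs fun x hx => ?_)
    exact (Submodule.Quotient.mk_eq_zero N).2 (Submodule.subset_span ⟨x, hx, rfl⟩)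
  rw [← N.ker_mkQ, LinearMap.ker_eq_top]
  exact congrArg ModuleCat.Hom.hom hmkQ

lemma finite_leftAdjoint_obj (adj : E ⊣ ModuleCat.restrictScalars f) (M : ModuleCat.{v} B)
    [Module.Finite B M] : Module.Finite A (E.obj M) := by
  obtain ⟨s, hs_fin, hs⟩ := Submodule.fg_def.1 (Module.Finite.fg_top (R := B) (M := M))
  exact ⟨Submodule.fg_def.2 ⟨_, hs_fin.image _, span_unit_image_eq_top adj hs⟩⟩

end ChangeOfRings

section FinDim

universe v

variable {R : Type u} [Ring R]

lemma projDim_le_finDim (M : ModuleCat.{u} R) [Module.Finite R M] (hM : projDim M ≠ ⊤) :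
    projDim M ≤ finDim R :=
  le_sSup ⟨M, ‹_›, hM, rfl⟩

lemma exists_projDim_eq_finDim (h : finDim R < ⊤) :
    ∃ M : ModuleCat.{u} R, Module.Finite R M ∧ projDim M = finDim R := by
  have hR : projDim (ModuleCat.of R R) ≤ (0 : ℕ) := (projDim_le_iff _ 0).2 inferInstance
  have : Nonempty {d : ℕ∞ | ∃ M : ModuleCat.{u} R,
      Module.Finite R M ∧ projDim M ≠ ⊤ ∧ projDim M = d} :=
    ⟨_, ModuleCat.of R R, inferInstanceAs (Module.Finite R R),
      (hR.trans_lt (ENat.natCast_lt_top 0)).ne, rfl⟩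
  obtain ⟨M, hM, -, hdim⟩ := ENat.sSup_mem_of_nonempty_of_lt_top h
  exact ⟨M, hM, hdim⟩

lemma finite_of_epi {M N : ModuleCat.{v} R} (g : M ⟶ N) [hg : Epi g] [Module.Finite R M] :
    Module.Finite R N :=
  Module.Finite.of_surjective g.hom ((ModuleCat.epi_iff_surjective g).1 hg)

lemma finDim_le_projDim_of_mono {M N : ModuleCat.{u} R} (i : M ⟶ N) [Mono i] [Module.Finite R N]
    (hdim : projDim M = finDim R) (hfin : finDim R < ⊤) : finDim R ≤ projDim N := by
  rcases eq_or_ne (projDim N) ⊤ with hN | hN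
  · exact hN ▸ le_top
  have hM : projDim M ≠ ⊤ := hdim.trans_ne hfin.ne
  have hS : (ShortComplex.mk i (cokernel.π i) (by simp)).ShortExact :=
    { exact := ShortComplex.exact_cokernel i }
  have : Module.Finite R ↑(cokernel i) := finite_of_epi (cokernel.π i)
  have hcoker : projDim (cokernel i) ≤ projDim M :=
    hdim ▸ projDim_le_finDim _ (projDim_X₃_ne_top hS hM hN)
  exact hdim ▸ projDim_X₁_le_projDim_X₂ hS hM hcoker

end FinDim

/-- Let `f : B →+* A` be a ring homomorphism such that `A` is a finitely generated projective
left `B`-module and a faithfully flat right `B`-module (via `f`).  If `fin.dim B < ∞`, then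
`fin.dim B ≤ fin.dim A`.  (Theorem 2.3 of the paper, stated with the module-theoretic
properties that a right faithfully flat weak `H`-Galois extension `A/B` provides.)

The extension-of-scalars functor `A ⊗_B -` is encoded as a functor
`E : ModuleCat B ⥤ ModuleCat A` that is left adjoint to restriction of scalars along `f`
(any such left adjoint is naturally isomorphic to `A ⊗_B -`).  Being a left adjoint, `E` is
automatically right exact, so faithful flatness of `A` as a right `B`-module is exactly the
statement that `E` preserves monomorphisms (flatness) and sends no nonzero module to zero. -/
theorem finDim_le_of_faithfullyFlat_extension (B A : Type u) [Ring B] [Ring A] (f : B →+* A)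
    (hAfin : Module.Finite B ((ModuleCat.restrictScalars f).obj (ModuleCat.of A A)))
    (hAproj : Module.Projective B ((ModuleCat.restrictScalars f).obj (ModuleCat.of A A)))
    (E : ModuleCat.{u} B ⥤ ModuleCat.{u} A) (adj : E ⊣ ModuleCat.restrictScalars f)
    (hflat : E.PreservesMonomorphisms)
    (hfaithful : ∀ X : ModuleCat.{u} B, Limits.IsZero (E.obj X) → Limits.IsZero X)
    (hfin : finDim B < ⊤) :
    finDim B ≤ finDim A := by
  have hE_add : E.Additive := adj.left_adjoint_additive
  have hE := preservesHomology_of_adjunction_of_preservesMonomorphisms adj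
  have hE_proj := Functor.preservesProjectiveObjects_of_adjunction_of_preservesEpimorphisms adj
  have hR := restrictScalars_preservesHomology f
  have hR_proj := restrictScalars_preservesProjectiveObjects.{u} f
  obtain ⟨M, hM, hdim⟩ := exists_projDim_eq_finDim hfin
  have hEM_le : projDim (E.obj M) ≤ projDim M := projDim_map_le E M
  have hEM_fin : Module.Finite A (E.obj M) := finite_leftAdjoint_obj adj M
  have hREM_fin := finite_restrictScalars_obj f (E.obj M)
  have hη : Mono (adj.unit.app M) := mono_unit_app_of_reflects_isZero adj hfaithful M
  calc finDim B ≤ projDim ((ModuleCat.restrictScalars f).obj (E.obj M)) :=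
        finDim_le_projDim_of_mono (adj.unit.app M) hdim hfin
    _ ≤ projDim (E.obj M) := projDim_map_le (ModuleCat.restrictScalars f) (E.obj M)
    _ ≤ finDim A := projDim_le_finDim _ ((hEM_le.trans_eq hdim).trans_lt hfin).ne
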